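/- arXiv:math/0512085 — 7 statements merged into one kernel-verified Lean document; each statement's English description precedes it below -/
import Mathlib

section
/- Let p be an odd prime and let B be a finite-dimensional 𝔽_p-vector space equipped with a nondegenerate symmetric 𝔽_p-bilinear form β. Suppose C, C_F, C_G are subspaces of B, each equal to its own orthogonal complement with respect to β, and suppose B is the internal direct sum of C_F and C_G. Then the 𝔽_p-dimension of the quotient C / ((C ∩ C_F) + (C ∩ C_G)) is even. -/
theorem even_aux {k V : Type*} [Field k] [AddCommGroup V] [Module k V] [FiniteDimensional k V]
    (h2 : (2 : k) ≠ 0) (ω : LinearMap.BilinForm k V) (hs : ∀ x y, ω x y = - ω y x)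
    (hn : ∀ x, (∀ y, ω x y = 0) → x = 0) : Even (Module.finrank k V) := by
  by_contra hne
  rw [Nat.not_even_iff_odd] at hne
  let b := Module.finBasis k V
  have hnd : ω.Nondegenerate := by
    refine ⟨fun x hx => hn x hx, fun x hx => hn x fun y => ?_⟩
    rw [hs, hx, neg_zero]
  have hdet := (LinearMap.BilinForm.nondegenerate_iff_det_ne_zero (B := ω) b).1 hnd
  set M := LinearMap.BilinForm.toMatrix b ω with hM
  have hT : M.transpose = -M := by
    ext i j
    simp only [hM, Matrix.transpose_apply, Matrix.neg_apply]
    exact hs _ _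
  have h := Matrix.det_transpose M
  rw [hT, Matrix.det_neg, Fintype.card_fin, hne.neg_one_pow] at h
  apply hdet
  have : (2 : k) * M.det = 0 := by linear_combination -h
  exact (mul_eq_zero.1 this).resolve_left h2

theorem even_quot_aux {k V : Type*} [Field k] [AddCommGroup V] [Module k V]
    [FiniteDimensional k V]
    (h2 : (2 : k) ≠ 0) (ω : LinearMap.BilinForm k V) (hs : ∀ x y, ω x y = - ω y x)
    (K : Submodule k V) (hK : ∀ x, x ∈ K ↔ ∀ y, ω x y = 0) :
    Even (Module.finrank k (V ⧸ K)) := by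
  obtain ⟨W, hW⟩ := K.exists_isCompl
  rw [(Submodule.quotientEquivOfIsCompl K W hW).finrank_eq]
  refine even_aux h2 (ω.restrict W) (fun x y => hs x y) fun x hx => ?_
  have hxK : (x : V) ∈ K := by
    rw [hK]
    intro y
    obtain ⟨a, ha, w, hw, rfl⟩ := Submodule.mem_sup.1
      (show y ∈ K ⊔ W by rw [hW.sup_eq_top]; trivial)
    have h1 : ω x w = 0 := hx ⟨w, hw⟩
    rw [map_add, h1, hs, (hK a).1 ha]
    simp
  exact Subtype.ext (Submodule.disjoint_def.1 hW.disjoint _ hxK x.2)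

/-- Howard's linear-algebra lemma: if `B` is a finite-dimensional
vector space over `𝔽_p` (`p` an odd prime) with a nondegenerate symmetric bilinear
form `β`, and `C`, `CF`, `CG` are subspaces each equal to its own orthogonal
complement, with `B` the internal direct sum of `CF` and `CG`, then
`dim C / ((C ∩ CF) + (C ∩ CG))` is even. -/
theorem stmt_0 (p : ℕ) [Fact p.Prime] (hodd : Odd p)
    (B : Type) [AddCommGroup B] [Module (ZMod p) B] [FiniteDimensional (ZMod p) B]
    (β : LinearMap.BilinForm (ZMod p) B)
    (hsymm : ∀ x y : B, β x y = β y x)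
    (hnd : β.Nondegenerate)
    (C CF CG : Submodule (ZMod p) B)
    (hC : β.orthogonal C = C) (hCF : β.orthogonal CF = CF) (hCG : β.orthogonal CG = CG)
    (hcompl : IsCompl CF CG) :
    Even (Module.finrank (ZMod p)
      (↥C ⧸ Submodule.comap C.subtype (C ⊓ CF ⊔ C ⊓ CG))) := by
  have h2 : (2 : ZMod p) ≠ 0 := by
    intro h
    have h' : ((2 : ℕ) : ZMod p) = 0 := by exact_mod_cast h
    rw [ZMod.natCast_eq_zero_iff] at h'
    have := (Nat.prime_dvd_prime_iff_eq Fact.out Nat.prime_two).1 h'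
    subst this
    exact absurd hodd (by decide)
  have iso : ∀ D : Submodule (ZMod p) B, β.orthogonal D = D → ∀ x ∈ D, ∀ y ∈ D, β x y = 0 := by
    intro D hD x hx y hy
    rw [← hD] at hy
    exact LinearMap.BilinForm.mem_orthogonal_iff.1 hy x hx
  obtain ⟨P, hPF, hPG⟩ : ∃ P : B →ₗ[ZMod p] B, (∀ x, P x ∈ CF) ∧ ∀ x, x - P x ∈ CG := by
    refine ⟨CF.subtype ∘ₗ Submodule.projectionOnto CF CG hcompl, fun x => by simp, fun x => ?_⟩
    refine (Submodule.ker_projectionOnto hcompl).le (LinearMap.mem_ker.2 ?_)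
    rw [map_sub, LinearMap.comp_apply, Submodule.subtype_apply,
      Submodule.projectionOnto_apply_left, sub_self]
  let ω : LinearMap.BilinForm (ZMod p) C := (β ∘ₗ P).compl₁₂ C.subtype C.subtype
  have hω : ∀ x y : C, ω x y = β (P x) y := fun _ _ => rfl
  refine even_quot_aux h2 ω ?_ _ ?_
  · intro x y
    rw [hω, hω]
    have e0 := iso C hC x x.2 y y.2
    have e1 := iso CF hCF _ (hPF x) _ (hPF y)
    have e2 := iso CG hCG _ (hPG x) _ (hPG y)
    have e3 := hsymm (P y) x
    simp only [map_sub, LinearMap.sub_apply] at e2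
    linear_combination -e2 + e0 + e1 + e3
  · intro x
    rw [Submodule.mem_comap]
    constructor
    · intro hx y
      obtain ⟨a, ha, b, hb, hab⟩ := Submodule.mem_sup.1 hx
      have hPa : P x = a := by
        have h1 : P x - a ∈ CF := CF.sub_mem (hPF _) ha.2
        have h3 : P x - a ∈ CG := by
          have : P x - a = b - ((x : B) - P x) := by
            have : (x : B) = a + b := hab.symm
            rw [this]; abel
          rw [this]
          exact CG.sub_mem hb.2 (hPG _)
        exact sub_eq_zero.1 (Submodule.disjoint_def.1 hcompl.disjoint _ h1 h3)
      rw [hω, hPa]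
      exact iso C hC _ ha.1 _ y.2
    · intro h
      have hP : P x ∈ C := by
        refine hC.le (LinearMap.BilinForm.mem_orthogonal_iff.2 ?_)
        intro y hy
        show β y (P x) = 0
        rw [hsymm]
        exact h ⟨y, hy⟩
      exact Submodule.mem_sup.2 ⟨P x, ⟨hP, hPF _⟩, x - P x, ⟨C.sub_mem x.2 hP, hPG _⟩, by simp⟩
end

section
/- With the data and global duality hypothesis of the abstract Selmer setup, the subspace Sel(F∩G) is exactly the kernel of the map Sel(F+G) → B̄, and dim_{𝔽_p} Sel(F+G)/Sel(F∩G) = Σ_{v∈S} dim_{𝔽_p} F_v/(F_v ∩ G_v). -/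
open Module Submodule

theorem aux_half {K V : Type*} [Field K] [AddCommGroup V] [Module K V] [FiniteDimensional K V]
    (b : LinearMap.BilinForm K V) (hn : b.Nondegenerate)
    (W : Submodule K V) (hW : b.orthogonal W = W) : finrank K V = 2 * finrank K W := by
  have h := LinearMap.BilinForm.finrank_orthogonal hn W
  rw [hW] at h
  have := Submodule.finrank_le W
  omega

theorem aux_quot {K V : Type*} [Field K] [AddCommGroup V] [Module K V] [FiniteDimensional K V]
    (W X : Submodule K V) (h : X ≤ W) :
    finrank K (↥W ⧸ Submodule.comap W.subtype X) + finrank K X = finrank K W := by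
  rw [← (Submodule.comapSubtypeEquivOfLe h).finrank_eq]
  exact Submodule.finrank_quotient_add_finrank _

/-- Abstract Selmer setup: `Sel(F∩G)` is the kernel of the
localization map `Sel(F+G) → B̄`, and
`dim Sel(F+G)/Sel(F∩G) = Σ_{v∈S} dim F_v/(F_v ∩ G_v)`. -/
theorem stmt_1
    (p : ℕ) [Fact p.Prime] (hodd : Odd p)
    (ι : Type) [Fintype ι]
    (B : ι → Type) [∀ v, AddCommGroup (B v)] [∀ v, Module (ZMod p) (B v)]
    [∀ v, FiniteDimensional (ZMod p) (B v)]
    (β : ∀ v, LinearMap.BilinForm (ZMod p) (B v))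
    (hβsymm : ∀ v (x y : B v), β v x y = β v y x)
    (hβnd : ∀ v, (β v).Nondegenerate)
    (F G : ∀ v, Submodule (ZMod p) (B v))
    (hF : ∀ v, (β v).orthogonal (F v) = F v)
    (hG : ∀ v, (β v).orthogonal (G v) = G v)
    (H : Type) [AddCommGroup H] [Module (ZMod p) H]
    (loc : ∀ v, H →ₗ[ZMod p] B v)
    -- the forms induced by the `β v` on the quotients `(F_v + G_v)/(F_v ∩ G_v)`
    (βbar : ∀ v, LinearMap.BilinForm (ZMod p)
      (↥(F v ⊔ G v) ⧸ Submodule.comap (F v ⊔ G v).subtype (F v ⊓ G v)))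
    (hβbar : ∀ v (x y : ↥(F v ⊔ G v)),
      βbar v (Submodule.Quotient.mk x) (Submodule.Quotient.mk y) = β v x y)
    -- the localization map `φ : Sel(F+G) → B̄ = ⊕_v (F_v + G_v)/(F_v ∩ G_v)`
    (φ : ↥(⨅ v, Submodule.comap (loc v) (F v ⊔ G v)) →ₗ[ZMod p]
      ∀ v, ↥(F v ⊔ G v) ⧸ Submodule.comap (F v ⊔ G v).subtype (F v ⊓ G v))
    (hφ : ∀ x v, φ x v = Submodule.Quotient.mk
      ⟨loc v x, by exact (Submodule.mem_iInf _).mp x.2 v⟩)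
    -- the orthogonal direct-sum form on `B̄`
    (βtot : LinearMap.BilinForm (ZMod p)
      (∀ v, ↥(F v ⊔ G v) ⧸ Submodule.comap (F v ⊔ G v).subtype (F v ⊓ G v)))
    (hβtot : ∀ x y, βtot x y = ∑ v, βbar v (x v) (y v))
    -- global duality hypothesis: the image `C` of `Sel(F+G)` in `B̄` is its own
    -- orthogonal complement
    (hdual : βtot.orthogonal (LinearMap.range φ) = LinearMap.range φ) :
    LinearMap.ker φ =
      Submodule.comap (⨅ v, Submodule.comap (loc v) (F v ⊔ G v)).subtype
        (⨅ v, Submodule.comap (loc v) (F v ⊓ G v)) ∧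
    finrank (ZMod p)
      (↥(⨅ v, Submodule.comap (loc v) (F v ⊔ G v)) ⧸
        Submodule.comap (⨅ v, Submodule.comap (loc v) (F v ⊔ G v)).subtype
          (⨅ v, Submodule.comap (loc v) (F v ⊓ G v))) =
    ∑ v, finrank (ZMod p) (↥(F v) ⧸ Submodule.comap (F v).subtype (F v ⊓ G v)) := by
  classical
  have hker : LinearMap.ker φ =
      Submodule.comap (⨅ v, Submodule.comap (loc v) (F v ⊔ G v)).subtype
        (⨅ v, Submodule.comap (loc v) (F v ⊓ G v)) := by
    ext x
    simp only [LinearMap.mem_ker, funext_iff, hφ, Pi.zero_apply, Submodule.Quotient.mk_eq_zero,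
      Submodule.mem_comap, Submodule.mem_iInf, Submodule.subtype_apply]
  refine ⟨hker, ?_⟩
  rw [← hker, φ.quotKerEquivRange.finrank_eq]
  have hbs : ∀ v x y, βbar v x y = βbar v y x := by
    intro v x y
    obtain ⟨x, rfl⟩ := Submodule.Quotient.mk_surjective _ x
    obtain ⟨y, rfl⟩ := Submodule.Quotient.mk_surjective _ y
    rw [hβbar, hβbar, hβsymm]
  have hts : ∀ x y, βtot x y = βtot y x := by
    intro x y
    rw [hβtot, hβtot]
    exact Finset.sum_congr rfl fun v _ => hbs v _ _
  have hsep : ∀ x, (∀ y, βtot x y = 0) → x = 0 := by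
    intro x hx
    funext v
    obtain ⟨a, ha⟩ := Submodule.Quotient.mk_surjective _ (x v)
    have key : ∀ y : ↥(F v ⊔ G v), β v y a = 0 := by
      intro y
      have h := hx (Pi.single v (Submodule.Quotient.mk y))
      rw [hβtot, Finset.sum_eq_single v] at h
      · rw [Pi.single_eq_same, ← ha, hβbar] at h
        rw [hβsymm]; exact h
      · intro w _ hw
        rw [Pi.single_eq_of_ne hw, map_zero]
      · intro h'; exact absurd (Finset.mem_univ v) h'
    rw [← ha, Pi.zero_apply, Submodule.Quotient.mk_eq_zero]
    refine ⟨?_, ?_⟩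
    · refine (hF v).le ?_
      intro y hy
      exact key ⟨y, Submodule.mem_sup_left hy⟩
    · refine (hG v).le ?_
      intro y hy
      exact key ⟨y, Submodule.mem_sup_right hy⟩
  have hnd : βtot.Nondegenerate :=
    ⟨hsep, fun y hy => hsep y fun x => by rw [hts]; exact hy x⟩
  have h1 := aux_half βtot hnd _ hdual
  rw [Module.finrank_pi_fintype] at h1
  have h2 : ∀ v, finrank (ZMod p)
      (↥(F v ⊔ G v) ⧸ Submodule.comap (F v ⊔ G v).subtype (F v ⊓ G v)) =
      2 * finrank (ZMod p) (↥(F v) ⧸ Submodule.comap (F v).subtype (F v ⊓ G v)) := by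
    intro v
    have e1 := aux_half (β v) (hβnd v) _ (hF v)
    have e2 := aux_half (β v) (hβnd v) _ (hG v)
    have e3 := aux_quot (F v ⊔ G v) (F v ⊓ G v) (inf_le_left.trans le_sup_left)
    have e4 := aux_quot (F v) (F v ⊓ G v) inf_le_left
    have e5 := Submodule.finrank_sup_add_finrank_inf_eq (F v) (G v)
    omega
  rw [Finset.sum_congr rfl fun v _ => h2 v, ← Finset.mul_sum] at h1
  omega
end

section
/- With the data and global duality hypothesis of the abstract Selmer setup, assume in addition that Sel(F∩G) is finite-dimensional over 𝔽_p. Then dim_{𝔽_p} Sel(F+G) ≡ dim_{𝔽_p} (Sel(F) + Sel(G)) (mod 2). -/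
open Module Submodule


/-- The rank of a skew form in odd characteristic is even. -/
theorem skew_parity {K V : Type} [Field K] [AddCommGroup V] [Module K V] [FiniteDimensional K V]
    (h2 : (2 : K) ≠ 0) (ω : LinearMap.BilinForm K V) (hω : ∀ x y, ω x y = - ω y x) :
    finrank K V ≡ finrank K (LinearMap.ker ω) [MOD 2] := by
  obtain ⟨W, hW⟩ := Submodule.exists_isCompl (LinearMap.ker ω)
  have hsum := Submodule.finrank_add_eq_of_isCompl hW
  have key : ∀ x : W, (∀ y : W, ω x y = 0) → x = 0 := by
    intro x hx
    have : (x : V) ∈ LinearMap.ker ω := by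
      rw [LinearMap.mem_ker]
      ext y
      have hy : y ∈ LinearMap.ker ω ⊔ W := by rw [hW.sup_eq_top]; trivial
      obtain ⟨k, hk, w, hw, rfl⟩ := Submodule.mem_sup.mp hy
      have h1 : ω x k = 0 := by
        rw [hω, LinearMap.mem_ker.mp hk]; simp
      have h3 := hx ⟨w, hw⟩
      simp only [map_add, h1, LinearMap.zero_apply, zero_add]
      exact h3
    have h0 := (Submodule.disjoint_def.mp hW.disjoint) x this x.2
    exact Subtype.ext h0
  let ω' : LinearMap.BilinForm K W := ω.restrict W
  have hs : ∀ x y, ω' x y = - ω' y x := fun x y => hω x y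
  have hnd : ω'.Nondegenerate := by
    constructor
    · intro x hx
      exact key x hx
    · intro x hx
      refine key x (fun y => ?_)
      rw [hω]
      have := hx y
      change ω y x = 0 at this
      rw [this, neg_zero]
  let b := finBasis K W
  have hdet := (LinearMap.BilinForm.nondegenerate_iff_det_ne_zero b).mp hnd
  set M := LinearMap.BilinForm.toMatrix b ω' with hM
  have hT : M.transpose = -M := by
    ext i j
    simp only [Matrix.transpose_apply, Matrix.neg_apply, hM, LinearMap.BilinForm.toMatrix_apply]
    exact hs _ _
  have hd : M.det = (-1) ^ (finrank K W) * M.det := by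
    conv_lhs => rw [← Matrix.det_transpose, hT, Matrix.det_neg, Fintype.card_fin]
  have hev : Even (finrank K W) := by
    by_contra ho
    rw [Nat.not_even_iff_odd] at ho
    rw [ho.neg_one_pow] at hd
    have : (2 : K) * M.det = 0 := by linear_combination hd
    rcases mul_eq_zero.mp this with h | h
    · exact h2 h
    · exact hdet h
  obtain ⟨m, hm⟩ := hev
  unfold Nat.ModEq
  omega

/-- A linear choice of the component along `F` on `F + G`. -/
theorem exists_splitting {K V : Type} [Field K] [AddCommGroup V] [Module K V]
    (F G : Submodule K V) :
    ∃ a : V →ₗ[K] V, ∀ x ∈ F ⊔ G, a x ∈ F ∧ x - a x ∈ G := by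
  let c : (F × G) →ₗ[K] V := F.subtype.coprod G.subtype
  obtain ⟨s, hs⟩ := LinearMap.exists_rightInverse_of_surjective c.rangeRestrict
    (LinearMap.range_eq_top.mpr c.surjective_rangeRestrict)
  obtain ⟨t, ht⟩ := LinearMap.exists_extend (F.subtype ∘ₗ LinearMap.fst K F G ∘ₗ s)
  refine ⟨t, fun x hx => ?_⟩
  have hx' : x ∈ LinearMap.range c := by
    obtain ⟨f, hf, g, hg, rfl⟩ := Submodule.mem_sup.mp hx
    exact ⟨(⟨f, hf⟩, ⟨g, hg⟩), by simp [c]⟩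
  have h1 : t x = ((s ⟨x, hx'⟩).1 : V) := LinearMap.congr_fun ht ⟨x, hx'⟩
  have h2 : ((s ⟨x, hx'⟩).1 : V) + ((s ⟨x, hx'⟩).2 : V) = x :=
    congrArg Subtype.val (LinearMap.congr_fun hs ⟨x, hx'⟩)
  rw [h1]
  refine ⟨(s ⟨x, hx'⟩).1.2, ?_⟩
  have : x - ((s ⟨x, hx'⟩).1 : V) = ((s ⟨x, hx'⟩).2 : V) := by
    rw [sub_eq_iff_eq_add, add_comm]; exact h2.symm
  rw [this]
  exact (s ⟨x, hx'⟩).2.2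

/-- Abstract Selmer setup with global duality: if `Sel(F∩G)` is
finite-dimensional, then `dim Sel(F+G) ≡ dim (Sel(F) + Sel(G)) (mod 2)`. -/
theorem stmt_2
    (p : ℕ) [Fact p.Prime] (hodd : Odd p)
    (ι : Type) [Fintype ι]
    (B : ι → Type) [∀ v, AddCommGroup (B v)] [∀ v, Module (ZMod p) (B v)]
    [∀ v, FiniteDimensional (ZMod p) (B v)]
    (β : ∀ v, LinearMap.BilinForm (ZMod p) (B v))
    (hβsymm : ∀ v (x y : B v), β v x y = β v y x)
    (hβnd : ∀ v, (β v).Nondegenerate)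
    (F G : ∀ v, Submodule (ZMod p) (B v))
    (hF : ∀ v, (β v).orthogonal (F v) = F v)
    (hG : ∀ v, (β v).orthogonal (G v) = G v)
    (H : Type) [AddCommGroup H] [Module (ZMod p) H]
    (loc : ∀ v, H →ₗ[ZMod p] B v)
    -- the forms induced by the `β v` on the quotients `(F_v + G_v)/(F_v ∩ G_v)`
    (βbar : ∀ v, LinearMap.BilinForm (ZMod p)
      (↥(F v ⊔ G v) ⧸ Submodule.comap (F v ⊔ G v).subtype (F v ⊓ G v)))
    (hβbar : ∀ v (x y : ↥(F v ⊔ G v)),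
      βbar v (Submodule.Quotient.mk x) (Submodule.Quotient.mk y) = β v x y)
    -- the localization map `φ : Sel(F+G) → B̄ = ⊕_v (F_v + G_v)/(F_v ∩ G_v)`
    (φ : ↥(⨅ v, Submodule.comap (loc v) (F v ⊔ G v)) →ₗ[ZMod p]
      ∀ v, ↥(F v ⊔ G v) ⧸ Submodule.comap (F v ⊔ G v).subtype (F v ⊓ G v))
    (hφ : ∀ x v, φ x v = Submodule.Quotient.mk
      ⟨loc v x, by exact (Submodule.mem_iInf _).mp x.2 v⟩)
    -- the orthogonal direct-sum form on `B̄`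
    (βtot : LinearMap.BilinForm (ZMod p)
      (∀ v, ↥(F v ⊔ G v) ⧸ Submodule.comap (F v ⊔ G v).subtype (F v ⊓ G v)))
    (hβtot : ∀ x y, βtot x y = ∑ v, βbar v (x v) (y v))
    -- global duality hypothesis: the image `C` of `Sel(F+G)` in `B̄` is its own
    -- orthogonal complement
    (hdual : βtot.orthogonal (LinearMap.range φ) = LinearMap.range φ)
    -- `Sel(F∩G)` is finite-dimensional
    (hfin : FiniteDimensional (ZMod p) ↥(⨅ v, Submodule.comap (loc v) (F v ⊓ G v))) :
    finrank (ZMod p) ↥(⨅ v, Submodule.comap (loc v) (F v ⊔ G v)) ≡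
      finrank (ZMod p)
        ↥((⨅ v, Submodule.comap (loc v) (F v)) ⊔ (⨅ v, Submodule.comap (loc v) (G v)))
      [MOD 2] := by
  have h2 : (2 : ZMod p) ≠ 0 := by
    intro h
    have h' : ((2 : ℕ) : ZMod p) = 0 := by exact_mod_cast h
    rw [ZMod.natCast_eq_zero_iff] at h'
    have := (Nat.prime_dvd_prime_iff_eq (Fact.out : p.Prime) Nat.prime_two).mp h'
    subst this
    exact absurd hodd (by decide)
  have hFF : ∀ v, ∀ x ∈ F v, ∀ y ∈ F v, β v x y = 0 := by
    intro v x hx y hy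
    rw [← hF v] at hy
    exact LinearMap.BilinForm.mem_orthogonal_iff.mp hy x hx
  have hGG : ∀ v, ∀ x ∈ G v, ∀ y ∈ G v, β v x y = 0 := by
    intro v x hx y hy
    rw [← hG v] at hy
    exact LinearMap.BilinForm.mem_orthogonal_iff.mp hy x hx
  have hFG : ∀ v, ∀ x ∈ F v ⊓ G v, ∀ y ∈ F v ⊔ G v, β v x y = 0 := by
    intro v x hx y hy
    obtain ⟨f, hf, g, hg, rfl⟩ := Submodule.mem_sup.mp hy
    rw [map_add, hFF v x hx.1 f hf, hGG v x hx.2 g hg, add_zero]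
  choose a ha using fun v => exists_splitting (F v) (G v)
  let V := ⨅ v, Submodule.comap (loc v) (F v ⊔ G v)
  have hmem : ∀ (x : V) v, loc v x ∈ F v ⊔ G v := fun x v => (Submodule.mem_iInf _).mp x.2 v
  -- global reciprocity on the Selmer group
  have hrec : ∀ x y : V, ∑ v, β v (loc v x) (loc v y) = 0 := by
    intro x y
    have hy : φ y ∈ βtot.orthogonal (LinearMap.range φ) := by
      rw [hdual]; exact ⟨y, rfl⟩
    have h := LinearMap.BilinForm.mem_orthogonal_iff.mp hy (φ x) ⟨x, rfl⟩
    have h' : βtot (φ x) (φ y) = 0 := h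
    rw [hβtot] at h'
    rw [← h']
    refine Finset.sum_congr rfl fun v _ => ?_
    rw [hφ, hφ, hβbar]
  -- finite-dimensionality
  have hfd : FiniteDimensional (ZMod p) V := by
    have hker : ∀ x : LinearMap.ker φ, ((x : V) : H) ∈ ⨅ v, Submodule.comap (loc v) (F v ⊓ G v) := by
      intro x
      rw [Submodule.mem_iInf]
      intro v
      have h : φ x v = 0 := by rw [LinearMap.mem_ker.mp x.2]; rfl
      rw [hφ, Submodule.Quotient.mk_eq_zero] at h
      exact h
    let j : LinearMap.ker φ →ₗ[ZMod p] ↥(⨅ v, Submodule.comap (loc v) (F v ⊓ G v)) :=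
      LinearMap.codRestrict _ (V.subtype ∘ₗ (LinearMap.ker φ).subtype) hker
    have hj : Function.Injective j := by
      intro x y hxy
      have h : ((j x : _) : H) = ((j y : _) : H) := congrArg Subtype.val hxy
      exact Subtype.ext (Subtype.ext h)
    have hk : FiniteDimensional (ZMod p) (LinearMap.ker φ) := FiniteDimensional.of_injective j hj
    have e := φ.quotKerEquivRange
    have hq : FiniteDimensional (ZMod p) (V ⧸ LinearMap.ker φ) :=
      Module.Finite.equiv e.symm
    exact Module.Finite.of_submodule_quotient (LinearMap.ker φ)
  -- the alternating form
  let ω : LinearMap.BilinForm (ZMod p) V :=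
    ∑ v, (β v).compl₁₂ (a v ∘ₗ loc v ∘ₗ V.subtype) (loc v ∘ₗ V.subtype)
  have hω : ∀ x y : V, ω x y = ∑ v, β v (a v (loc v x)) (loc v y) := by
    intro x y
    simp [ω, LinearMap.sum_apply]
  have hskew : ∀ x y, ω x y = - ω y x := by
    intro x y
    rw [eq_neg_iff_add_eq_zero, hω, hω, ← Finset.sum_add_distrib, ← hrec x y]
    refine Finset.sum_congr rfl fun v _ => ?_
    have hx := ha v _ (hmem x v)
    have hy := ha v _ (hmem y v)
    have e1 := hFF v _ hx.1 _ hy.1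
    have e2 := hGG v _ hx.2 _ hy.2
    have e3 := hβsymm v (a v (loc v y)) (loc v x)
    simp only [map_sub, LinearMap.sub_apply] at e2
    linear_combination e3 - e2 + e1
  have hpar := skew_parity h2 ω hskew
  have hle : (⨅ v, Submodule.comap (loc v) (F v)) ⊔ (⨅ v, Submodule.comap (loc v) (G v)) ≤ V :=
    sup_le (iInf_mono fun v => Submodule.comap_mono le_sup_left)
      (iInf_mono fun v => Submodule.comap_mono le_sup_right)
  have hkerω : LinearMap.ker ω = Submodule.comap V.subtype
      ((⨅ v, Submodule.comap (loc v) (F v)) ⊔ (⨅ v, Submodule.comap (loc v) (G v))) := by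
    ext x
    rw [LinearMap.mem_ker, Submodule.mem_comap]
    constructor
    · intro hx
      have hax : ∀ v, a v (loc v x) ∈ F v ⊔ G v := fun v =>
        Submodule.mem_sup_left (ha v _ (hmem x v)).1
      let c : ∀ v, ↥(F v ⊔ G v) ⧸ Submodule.comap (F v ⊔ G v).subtype (F v ⊓ G v) :=
        fun v => Submodule.Quotient.mk ⟨a v (loc v x), hax v⟩
      have hc : c ∈ βtot.orthogonal (LinearMap.range φ) := by
        rw [LinearMap.BilinForm.mem_orthogonal_iff]
        rintro _ ⟨y, rfl⟩
        change βtot (φ y) c = 0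
        have h0 : ω x y = 0 := by rw [hx]; rfl
        rw [hβtot, ← h0, hω]
        refine Finset.sum_congr rfl fun v _ => ?_
        simp only [c]
        rw [hφ, hβbar, hβsymm]
      rw [hdual] at hc
      obtain ⟨z, hz⟩ := hc
      have hzv : ∀ v, loc v z - a v (loc v x) ∈ F v ⊓ G v := by
        intro v
        have h := congrFun hz v
        rw [hφ, Submodule.Quotient.eq] at h
        exact h
      refine Submodule.mem_sup.mpr ⟨(z : H), ?_, (x : H) - z, ?_, by simp⟩
      · rw [Submodule.mem_iInf]
        intro v
        have := (F v).add_mem (hzv v).1 (ha v _ (hmem x v)).1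
        rwa [sub_add_cancel] at this
      · rw [Submodule.mem_iInf]
        intro v
        have := (G v).sub_mem (ha v _ (hmem x v)).2 (hzv v).2
        rw [sub_sub_sub_cancel_right] at this
        rw [Submodule.mem_comap, map_sub]
        exact this
    · intro hx
      obtain ⟨f, hf, g, hg, hfg⟩ := Submodule.mem_sup.mp hx
      have hfV : f ∈ V := hle (Submodule.mem_sup_left hf)
      rw [Submodule.mem_iInf] at hf hg
      ext y
      rw [hω, LinearMap.zero_apply, ← hrec ⟨f, hfV⟩ y]
      refine Finset.sum_congr rfl fun v _ => ?_
      have hxv : loc v (x : H) = loc v f + loc v g := by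
        rw [← map_add, hfg]; rfl
      have hfv : loc v f ∈ F v := hf v
      have hgv : loc v g ∈ G v := hg v
      have hax := ha v _ (hmem x v)
      rw [hxv] at hax
      have hin : a v (loc v f + loc v g) - loc v f ∈ F v ⊓ G v := by
        refine ⟨(F v).sub_mem hax.1 hfv, ?_⟩
        have := (G v).sub_mem hgv hax.2
        have e : loc v g - (loc v f + loc v g - a v (loc v f + loc v g))
          = a v (loc v f + loc v g) - loc v f := by abel
        rwa [e] at this
      have h0 := hFG v _ hin _ (hmem y v)
      rw [map_sub, LinearMap.sub_apply, sub_eq_zero] at h0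
      rw [hxv]
      exact h0
  rw [hkerω, (Submodule.comapSubtypeEquivOfLe hle).finrank_eq] at hpar
  exact hpar
end

section
/- With the data and global duality hypothesis of the abstract Selmer setup, assume in addition that Sel(F∩G) is finite-dimensional over 𝔽_p. Then dim_{𝔽_p} Sel(F) − dim_{𝔽_p} Sel(G) ≡ Σ_{v∈S} dim_{𝔽_p} F_v/(F_v ∩ G_v) (mod 2). -/
open Module Submodule

theorem skew_even {K V : Type*} [Field K] [AddCommGroup V] [Module K V] [FiniteDimensional K V]
    (h2 : (2 : K) ≠ 0) (ω : LinearMap.BilinForm K V) (hs : ∀ x y, ω x y = - ω y x) :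
    ∃ k, finrank K V = finrank K (LinearMap.ker ω) + 2 * k := by
  obtain ⟨W, hW⟩ := Submodule.exists_isCompl (LinearMap.ker ω)
  have hfr := Submodule.finrank_add_eq_of_isCompl hW
  set ρ : LinearMap.BilinForm K W := ω.compl₁₂ W.subtype W.subtype with hρ
  have hker : ∀ x : W, (∀ y : W, ρ x y = 0) → x = 0 := by
    intro x hx
    have h0 : (x : V) ∈ LinearMap.ker ω := by
      rw [LinearMap.mem_ker]
      ext z
      have hz : z ∈ LinearMap.ker ω ⊔ W := by rw [hW.sup_eq_top]; trivial
      obtain ⟨a, ha, b, hb, rfl⟩ := Submodule.mem_sup.mp hz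
      have h1 : ω x a = 0 := by
        rw [hs, LinearMap.mem_ker.mp ha]; simp
      have h3 : ω x b = 0 := hx ⟨b, hb⟩
      simp [h1, h3]
    have : (x : V) ∈ LinearMap.ker ω ⊓ W := ⟨h0, x.2⟩
    rw [hW.inf_eq_bot] at this
    exact Subtype.ext ((Submodule.mem_bot K).mp this)
  have hsρ : ∀ x y, ρ x y = - ρ y x := fun x y => hs _ _
  have hnd : ρ.Nondegenerate := by
    refine ⟨hker, fun x hx => hker x fun y => ?_⟩
    rw [hsρ, hx, neg_zero]
  let b := Module.finBasis K W
  have hdet := (LinearMap.BilinForm.nondegenerate_iff_det_ne_zero b).mp hnd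
  set M := LinearMap.BilinForm.toMatrix b ρ with hM
  have hMt : M.transpose = - M := by
    ext i j
    simp only [hM, Matrix.transpose_apply, Matrix.neg_apply, LinearMap.BilinForm.toMatrix_apply]
    exact hsρ _ _
  have hd : M.det = (-1) ^ (finrank K W) * M.det := by
    conv_lhs => rw [← Matrix.det_transpose, hMt, Matrix.det_neg, Fintype.card_fin]
  rcases Nat.even_or_odd (finrank K W) with he | ho
  · obtain ⟨k, hk⟩ := he
    exact ⟨k, by omega⟩
  · exfalso
    rw [ho.neg_one_pow] at hd
    have : 2 * M.det = 0 := by linear_combination hd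
    rcases mul_eq_zero.mp this with h | h
    · exact h2 h
    · exact hdet h

theorem exists_proj {K V : Type*} [Field K] [AddCommGroup V] [Module K V]
    (F G : Submodule K V) :
    ∃ π : V →ₗ[K] V, ∀ x ∈ F ⊔ G, π x ∈ F ∧ x - π x ∈ G := by
  let f : (F × G) →ₗ[K] V := F.subtype.coprod G.subtype
  obtain ⟨s, hs⟩ := LinearMap.exists_rightInverse_of_surjective f.rangeRestrict
    (LinearMap.range_rangeRestrict f)
  obtain ⟨π, hπ⟩ := LinearMap.exists_extend
    (F.subtype ∘ₗ LinearMap.fst K F G ∘ₗ s)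
  refine ⟨π, fun x hx => ?_⟩
  have hx' : x ∈ LinearMap.range f := by
    obtain ⟨a, ha, b, hb, rfl⟩ := Submodule.mem_sup.mp hx
    exact ⟨(⟨a, ha⟩, ⟨b, hb⟩), by simp [f]⟩
  have h1 : π x = (s ⟨x, hx'⟩).1 := LinearMap.congr_fun hπ ⟨x, hx'⟩
  have h2 : ((s ⟨x, hx'⟩).1 : V) + (s ⟨x, hx'⟩).2 = x :=
    congrArg Subtype.val (LinearMap.congr_fun hs ⟨x, hx'⟩)
  rw [h1]
  refine ⟨(s ⟨x, hx'⟩).1.2, ?_⟩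
  have : x - ((s ⟨x, hx'⟩).1 : V) = (s ⟨x, hx'⟩).2 := by
    rw [sub_eq_iff_eq_add, add_comm]; exact h2.symm
  rw [this]
  exact (s ⟨x, hx'⟩).2.2

theorem two_finrank {K V : Type*} [Field K] [AddCommGroup V] [Module K V] [FiniteDimensional K V]
    (β : LinearMap.BilinForm K V) (hk : ∀ x, (∀ y, β x y = 0) → x = 0) (F : Submodule K V)
    (hF : β.orthogonal F = F) : 2 * finrank K F = finrank K V := by
  have h := LinearMap.BilinForm.finrank_add_finrank_orthogonal' (B := β) F
  have hb : F ⊓ LinearMap.ker β = ⊥ := by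
    rw [eq_bot_iff]
    rintro x ⟨-, hx⟩
    exact (Submodule.mem_bot K).mpr (hk x fun y => by rw [LinearMap.mem_ker.mp hx]; rfl)
  rw [hF] at h
  have h' : finrank K (F ⊓ LinearMap.ker β : Submodule K V) = 0 := by rw [hb]; simp
  have h'' : finrank K F + finrank K F = finrank K V + 
    finrank K (F ⊓ LinearMap.ker β : Submodule K V) := h
  omega

theorem finrank_quot_comap {K V : Type*} [Field K] [AddCommGroup V] [Module K V]
    [FiniteDimensional K V] {P Q : Submodule K V} (h : P ≤ Q) :
    finrank K (Q ⧸ Submodule.comap Q.subtype P) + finrank K P = finrank K Q := by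
  rw [← (Submodule.comapSubtypeEquivOfLe h).finrank_eq]
  exact Submodule.finrank_quotient_add_finrank _

/-- Abstract Selmer setup with global duality: if `Sel(F∩G)` is
finite-dimensional, then `dim Sel(F) − dim Sel(G) ≡ Σ_{v∈S} dim F_v/(F_v ∩ G_v) (mod 2)`. -/
theorem stmt_3
    (p : ℕ) [Fact p.Prime] (hodd : Odd p)
    (ι : Type) [Fintype ι]
    (B : ι → Type) [∀ v, AddCommGroup (B v)] [∀ v, Module (ZMod p) (B v)]
    [∀ v, FiniteDimensional (ZMod p) (B v)]
    (β : ∀ v, LinearMap.BilinForm (ZMod p) (B v))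
    (hβsymm : ∀ v (x y : B v), β v x y = β v y x)
    (hβnd : ∀ v, (β v).Nondegenerate)
    (F G : ∀ v, Submodule (ZMod p) (B v))
    (hF : ∀ v, (β v).orthogonal (F v) = F v)
    (hG : ∀ v, (β v).orthogonal (G v) = G v)
    (H : Type) [AddCommGroup H] [Module (ZMod p) H]
    (loc : ∀ v, H →ₗ[ZMod p] B v)
    -- the forms induced by the `β v` on the quotients `(F_v + G_v)/(F_v ∩ G_v)`
    (βbar : ∀ v, LinearMap.BilinForm (ZMod p)
      (↥(F v ⊔ G v) ⧸ Submodule.comap (F v ⊔ G v).subtype (F v ⊓ G v)))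
    (hβbar : ∀ v (x y : ↥(F v ⊔ G v)),
      βbar v (Submodule.Quotient.mk x) (Submodule.Quotient.mk y) = β v x y)
    -- the localization map `φ : Sel(F+G) → B̄ = ⊕_v (F_v + G_v)/(F_v ∩ G_v)`
    (φ : ↥(⨅ v, Submodule.comap (loc v) (F v ⊔ G v)) →ₗ[ZMod p]
      ∀ v, ↥(F v ⊔ G v) ⧸ Submodule.comap (F v ⊔ G v).subtype (F v ⊓ G v))
    (hφ : ∀ x v, φ x v = Submodule.Quotient.mk
      ⟨loc v x, by exact (Submodule.mem_iInf _).mp x.2 v⟩)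
    -- the orthogonal direct-sum form on `B̄`
    (βtot : LinearMap.BilinForm (ZMod p)
      (∀ v, ↥(F v ⊔ G v) ⧸ Submodule.comap (F v ⊔ G v).subtype (F v ⊓ G v)))
    (hβtot : ∀ x y, βtot x y = ∑ v, βbar v (x v) (y v))
    -- global duality hypothesis: the image `C` of `Sel(F+G)` in `B̄` is its own
    -- orthogonal complement
    (hdual : βtot.orthogonal (LinearMap.range φ) = LinearMap.range φ)
    -- `Sel(F∩G)` is finite-dimensional
    (hfin : FiniteDimensional (ZMod p) ↥(⨅ v, Submodule.comap (loc v) (F v ⊓ G v))) :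
    (finrank (ZMod p) ↥(⨅ v, Submodule.comap (loc v) (F v)) : ℤ) -
      (finrank (ZMod p) ↥(⨅ v, Submodule.comap (loc v) (G v)) : ℤ) ≡
    ∑ v, (finrank (ZMod p)
        (↥(F v) ⧸ Submodule.comap (F v).subtype (F v ⊓ G v)) : ℤ) [ZMOD 2] := by
  classical
  have h2 : (2 : ZMod p) ≠ 0 := by
    intro h
    have h' : ((2 : ℕ) : ZMod p) = 0 := by exact_mod_cast h
    rw [ZMod.natCast_eq_zero_iff] at h'
    have := (Nat.prime_dvd_prime_iff_eq Fact.out Nat.prime_two).mp h'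
    subst this
    exact absurd hodd (by decide)
  have hFF : ∀ v, ∀ x ∈ F v, ∀ y ∈ F v, β v x y = 0 := by
    intro v x hx y hy
    rw [← hF v] at hy
    exact LinearMap.BilinForm.mem_orthogonal_iff.mp hy x hx
  have hGG : ∀ v, ∀ x ∈ G v, ∀ y ∈ G v, β v x y = 0 := by
    intro v x hx y hy
    rw [← hG v] at hy
    exact LinearMap.BilinForm.mem_orthogonal_iff.mp hy x hx
  have hInf : ∀ v, ∀ x ∈ F v ⊓ G v, ∀ y ∈ F v ⊔ G v, β v x y = 0 := by
    intro v x hx y hy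
    obtain ⟨a, ha, b, hb, rfl⟩ := Submodule.mem_sup.mp hy
    rw [map_add, hFF v x hx.1 a ha, hGG v x hx.2 b hb, add_zero]
  have hsymt : ∀ x y, βtot x y = βtot y x := by
    intro x y
    rw [hβtot, hβtot]
    refine Finset.sum_congr rfl fun v _ => ?_
    obtain ⟨a, ha⟩ := Submodule.Quotient.mk_surjective _ (x v)
    obtain ⟨b, hb⟩ := Submodule.Quotient.mk_surjective _ (y v)
    rw [← ha, ← hb, hβbar, hβbar, hβsymm]
  have hndt : ∀ x, (∀ y, βtot x y = 0) → x = 0 := by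
    intro x hx
    funext v
    obtain ⟨a, ha⟩ := Submodule.Quotient.mk_surjective _ (x v)
    have key : ∀ b : ↥(F v ⊔ G v), β v a b = 0 := by
      intro b
      have h := hx (Pi.single v (Submodule.Quotient.mk b))
      rw [hβtot, Finset.sum_eq_single v] at h
      · rwa [Pi.single_eq_same, ← ha, hβbar] at h
      · intro w _ hw
        rw [Pi.single_eq_of_ne hw, map_zero]
      · simp
    rw [← ha, Pi.zero_apply, Submodule.Quotient.mk_eq_zero, Submodule.mem_comap]
    constructor
    · change (a : B v) ∈ F v
      apply (hF v).le
      rw [LinearMap.BilinForm.mem_orthogonal_iff]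
      intro n hn
      rw [hβsymm]
      exact key ⟨n, Submodule.mem_sup_left hn⟩
    · change (a : B v) ∈ G v
      apply (hG v).le
      rw [LinearMap.BilinForm.mem_orthogonal_iff]
      intro n hn
      rw [hβsymm]
      exact key ⟨n, Submodule.mem_sup_right hn⟩
  -- dimension of `C`
  have hC : finrank (ZMod p) (LinearMap.range φ) = ∑ v, finrank (ZMod p)
        (↥(F v) ⧸ Submodule.comap (F v).subtype (F v ⊓ G v)) := by
    have h := two_finrank βtot hndt _ hdual
    rw [Module.finrank_pi_fintype] at h
    have : ∀ v, finrank (ZMod p)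
        (↥(F v ⊔ G v) ⧸ Submodule.comap (F v ⊔ G v).subtype (F v ⊓ G v)) =
        2 * finrank (ZMod p) (↥(F v) ⧸ Submodule.comap (F v).subtype (F v ⊓ G v)) := by
      intro v
      have e1 := two_finrank (β v) (hβnd v).1 _ (hF v)
      have e2 := two_finrank (β v) (hβnd v).1 _ (hG v)
      have e3 := Submodule.finrank_sup_add_finrank_inf_eq (F v) (G v)
      have e4 := finrank_quot_comap (inf_le_left : F v ⊓ G v ≤ F v)
      have e5 := finrank_quot_comap (inf_le_sup : F v ⊓ G v ≤ F v ⊔ G v)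
      omega
    rw [Finset.sum_congr rfl fun v _ => this v, ← Finset.mul_sum] at h
    omega
  have hφ1 : ∀ (x : ↥(⨅ v, Submodule.comap (loc v) (F v ⊔ G v))) v (h : loc v x ∈ F v ⊔ G v), φ x v = Submodule.Quotient.mk ⟨loc v x, h⟩ :=
    fun x v _ => hφ x v
  clear hφ
  have mX : ∀ x, x ∈ (⨅ v, Submodule.comap (loc v) (F v ⊔ G v)) ↔ ∀ v, loc v x ∈ F v ⊔ G v := by
    intro x; simp only [Submodule.mem_iInf, Submodule.mem_comap]
  revert φ mX
  generalize (⨅ v, Submodule.comap (loc v) (F v ⊔ G v)) = X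
  intro φ hdual hC hφ1 mX
  set SF : Submodule (ZMod p) H := ⨅ v, Submodule.comap (loc v) (F v) with hSF
  set SG : Submodule (ZMod p) H := ⨅ v, Submodule.comap (loc v) (G v) with hSG
  set SI : Submodule (ZMod p) H := ⨅ v, Submodule.comap (loc v) (F v ⊓ G v) with hSI
  have hφ : ∀ x v, φ x v = Submodule.Quotient.mk ⟨loc v x, (mX x).mp x.2 v⟩ :=
    fun x v => hφ1 x v _
  have mF : ∀ x, x ∈ SF ↔ ∀ v, loc v x ∈ F v := by
    intro x; simp only [hSF, Submodule.mem_iInf, Submodule.mem_comap]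
  have mG : ∀ x, x ∈ SG ↔ ∀ v, loc v x ∈ G v := by
    intro x; simp only [hSG, Submodule.mem_iInf, Submodule.mem_comap]
  have mI : ∀ x, x ∈ SI ↔ ∀ v, loc v x ∈ F v ⊓ G v := by
    intro x; simp only [hSI, Submodule.mem_iInf, Submodule.mem_comap]
  have hFX : SF ≤ X := fun x hx => (mX x).mpr fun v => Submodule.mem_sup_left ((mF x).mp hx v)
  have hGX : SG ≤ X := fun x hx => (mX x).mpr fun v => Submodule.mem_sup_right ((mG x).mp hx v)
  have hIe : SF ⊓ SG = SI := by
    ext x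
    rw [Submodule.mem_inf, mF, mG, mI, ← forall_and]
    rfl
  have hIX : SI ≤ X := fun x hx => hFX (hIe ▸ hx : x ∈ SF ⊓ SG).1
  have hkφ : LinearMap.ker φ = Submodule.comap X.subtype SI := by
    ext x
    rw [LinearMap.mem_ker, Submodule.mem_comap, mI, funext_iff]
    refine forall_congr' fun v => ?_
    rw [hφ, Pi.zero_apply, Submodule.Quotient.mk_eq_zero]
    rfl
  let eI : LinearMap.ker φ ≃ₗ[ZMod p] SI :=
    (LinearEquiv.ofEq _ _ hkφ).trans (Submodule.comapSubtypeEquivOfLe hIX)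
  have : FiniteDimensional (ZMod p) (LinearMap.ker φ) := Module.Finite.equiv eI.symm
  have hXfin : FiniteDimensional (ZMod p) X := by
    have : Module.Finite (ZMod p) (X ⧸ LinearMap.ker φ) :=
      Module.Finite.equiv φ.quotKerEquivRange.symm
    exact Module.Finite.of_submodule_quotient (LinearMap.ker φ)
  have : FiniteDimensional (ZMod p) SF := Submodule.finiteDimensional_of_le hFX
  have : FiniteDimensional (ZMod p) SG := Submodule.finiteDimensional_of_le hGX
  -- isotropy of `C`
  have hiso : ∀ x ∈ X, ∀ y ∈ X, ∑ v, β v (loc v x) (loc v y) = 0 := by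
    intro x hx y hy
    have h : φ ⟨y, hy⟩ ∈ βtot.orthogonal (LinearMap.range φ) := by
      rw [hdual]; exact ⟨_, rfl⟩
    have h' := LinearMap.BilinForm.mem_orthogonal_iff.mp h (φ ⟨x, hx⟩) ⟨_, rfl⟩
    rw [hβtot] at h'
    rw [← h']
    refine Finset.sum_congr rfl fun v _ => ?_
    rw [hφ, hφ, hβbar]
  choose π hπ using fun v => exists_proj (F v) (G v)
  let ω : LinearMap.BilinForm (ZMod p) X :=
    ∑ v, (β v).compl₁₂ (π v ∘ₗ loc v ∘ₗ X.subtype) (loc v ∘ₗ X.subtype)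
  have hω : ∀ x y : X, ω x y = ∑ v, β v (π v (loc v x)) (loc v y) := by
    intro x y
    simp [ω, LinearMap.sum_apply]
  have hskew : ∀ x y, ω x y = - ω y x := by
    intro x y
    rw [eq_neg_iff_add_eq_zero, hω, hω, ← Finset.sum_add_distrib, ← hiso x x.2 y y.2]
    refine Finset.sum_congr rfl fun v _ => ?_
    obtain ⟨a1, a2⟩ := hπ v _ ((mX x).mp x.2 v)
    obtain ⟨b1, b2⟩ := hπ v _ ((mX y).mp y.2 v)
    have e1 := hFF v _ a1 _ b1
    have e2 := hGG v _ a2 _ b2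
    have e3 := hβsymm v (π v (loc v y)) (loc v x)
    simp only [map_sub, LinearMap.sub_apply] at e2
    linear_combination e3 - e2 + e1
  obtain ⟨k, hk⟩ := skew_even h2 ω hskew
  have hkω : LinearMap.ker ω = Submodule.comap X.subtype (SF ⊔ SG) := by
    ext x
    rw [LinearMap.mem_ker, Submodule.mem_comap]
    constructor
    · intro hx
      let z : ∀ v, ↥(F v ⊔ G v) ⧸ Submodule.comap (F v ⊔ G v).subtype (F v ⊓ G v) :=
        fun v => Submodule.Quotient.mk ⟨π v (loc v x),
          Submodule.mem_sup_left (hπ v _ ((mX x).mp x.2 v)).1⟩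
      have hz : z ∈ LinearMap.range φ := by
        rw [← hdual, LinearMap.BilinForm.mem_orthogonal_iff]
        rintro _ ⟨y, rfl⟩
        rw [hsymt, hβtot]
        have := LinearMap.congr_fun hx y
        rw [hω] at this
        rw [LinearMap.zero_apply] at this
        rw [← this]
        refine Finset.sum_congr rfl fun v _ => ?_
        rw [hφ, hβbar]
      obtain ⟨a, ha⟩ := hz
      have hd : ∀ v, loc v a - π v (loc v x) ∈ F v ⊓ G v := by
        intro v
        have h := congrFun ha v
        rw [hφ, Submodule.Quotient.eq] at h
        exact h
      rw [Submodule.mem_sup]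
      refine ⟨a, (mF _).mpr fun v => ?_, x - a, (mG _).mpr fun v => ?_, by simp⟩
      · have := (F v).add_mem (hd v).1 (hπ v _ ((mX x).mp x.2 v)).1
        simpa using this
      · have := (G v).sub_mem (hπ v _ ((mX x).mp x.2 v)).2 (hd v).2
        simpa using this
    · intro hx
      obtain ⟨a, ha, b, hb, hab⟩ := Submodule.mem_sup.mp hx
      have hab' : (x : H) = a + b := hab.symm
      ext y
      rw [hω, LinearMap.zero_apply, ← hiso a (hFX ha) y y.2]
      refine Finset.sum_congr rfl fun v _ => ?_
      obtain ⟨a1, a2⟩ := hπ v _ ((mX a).mp (hFX ha) v)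
      obtain ⟨b1, b2⟩ := hπ v _ ((mX b).mp (hGX hb) v)
      have e1 := hInf v (loc v a - π v (loc v a))
        ⟨(F v).sub_mem ((mF a).mp ha v) a1, a2⟩ _ ((mX y).mp y.2 v)
      have e2 := hInf v (π v (loc v b))
        ⟨b1, by simpa using (G v).sub_mem ((mG b).mp hb v) b2⟩ _ ((mX y).mp y.2 v)
      rw [hab']
      simp only [map_sub, map_add, LinearMap.sub_apply, LinearMap.add_apply] at e1 ⊢
      linear_combination e2 - e1
  have f1 : finrank (ZMod p) (LinearMap.ker ω) = finrank (ZMod p) ↥(SF ⊔ SG) := by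
    rw [hkω]
    exact (Submodule.comapSubtypeEquivOfLe (sup_le hFX hGX)).finrank_eq
  have f2 := Submodule.finrank_sup_add_finrank_inf_eq SF SG
  rw [hIe] at f2
  have f3 := LinearMap.finrank_range_add_finrank_ker φ
  rw [eI.finrank_eq, hC] at f3
  rw [← Nat.cast_sum]
  generalize (∑ v, finrank (ZMod p)
        (↥(F v) ⧸ Submodule.comap (F v).subtype (F v ⊓ G v))) = N at *
  unfold Int.ModEq
  omega
end

section
/- Let A be a commutative ring, R a commutative A-algebra that is free of finite rank as an A-module, τ : R → A an A-linear map such that the A-bilinear form (r,s) ↦ τ(rs) on R is perfect, and ι an A-algebra involution of R. Let W be an R-module and B an A-module. Call a pairing e : W × W → R ⊗_A B R-semilinear if e(rx, y) = r·e(x,y) and e(x, ry) = ι(r)·e(x,y) for all r ∈ R, x,y ∈ W; call a pairing b : W × W → B ι-adjoint if it is A-bilinear and b(rx, y) = b(x, ι(r)y) for all r ∈ R, x,y ∈ W. Then composition with τ ⊗ id_B gives a bijection from the set of R-semilinear pairings W × W → R ⊗_A B onto the set of ι-adjoint pairings W × W → B; moreover an R-semilinear pairing e is perfect (meaning x ↦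 e(x,·) is a bijection from W onto Hom_R(W^ι, R ⊗_A B), where W^ι denotes W with R acting through ι) if and only if the corresponding ι-adjoint pairing b is perfect (meaning x ↦ b(x,·) is a bijection from W onto Hom_A(W, B)). -/
open TensorProduct

section Helpers

variable {A : Type} [CommRing A] {R : Type} [CommRing R] [Algebra A R]
  {B : Type} [AddCommGroup B] [Module A B]

theorem aux_key [Module.Free A R] [Module.Finite A R]
    (τ : R →ₗ[A] A)
    (hτ : Function.Bijective fun r : R => τ ∘ₗ LinearMap.mul A R r)
    (T : R ⊗[A] B →ₗ[A] B) (hT : ∀ r b, T (r ⊗ₜ[A] b) = τ r • b) :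
    (∀ z w : R ⊗[A] B, (∀ r : R, T (r • z) = T (r • w)) → z = w) ∧
    (∀ f : R →ₗ[A] B, ∃ z : R ⊗[A] B, ∀ r : R, T (r • z) = f r) := by
  classical
  let v := Module.Free.chooseBasis A R
  have hd : ∀ i, ∃ d : R, ∀ s, τ (d * s) = v.repr s i := by
    intro i
    obtain ⟨d, hd⟩ := hτ.2 (v.coord i)
    exact ⟨d, fun s => by simpa using LinearMap.congr_fun hd s⟩
  choose d hd using hd
  constructor
  · have key : ∀ z : R ⊗[A] B, z = ∑ i, v i ⊗ₜ[A] T (d i • z) := by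
      intro z
      induction z using TensorProduct.induction_on with
      | zero => simp
      | tmul s b =>
        have h : ∀ i, v i ⊗ₜ[A] T (d i • (s ⊗ₜ[A] b)) = (v.repr s i • v i) ⊗ₜ[A] b := by
          intro i
          rw [TensorProduct.smul_tmul', smul_eq_mul, hT, hd, TensorProduct.smul_tmul]
        rw [Finset.sum_congr rfl fun i _ => h i, ← TensorProduct.sum_tmul, v.sum_repr]
      | add x y hx hy =>
        simp only [smul_add, map_add, TensorProduct.tmul_add, Finset.sum_add_distrib]
        rw [← hx, ← hy]
    intro z w h
    rw [key z, key w]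
    exact Finset.sum_congr rfl fun i _ => by rw [h]
  · intro f
    refine ⟨∑ i, d i ⊗ₜ[A] f (v i), fun r => ?_⟩
    conv_rhs => rw [← v.sum_repr r]
    rw [Finset.smul_sum, map_sum, map_sum]
    refine Finset.sum_congr rfl fun i _ => ?_
    rw [TensorProduct.smul_tmul', smul_eq_mul, hT, mul_comm, hd, map_smul]

end Helpers

/-- With `R/A` and a perfect trace form `τ` as in Statement 4, and an
`A`-algebra involution `ι` of `R`: composition with `τ ⊗ id_B` is a bijection from
the set of `R`-semilinear pairings `W × W → R ⊗_A B` onto the set of `ι`-adjoint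
pairings `W × W → B`, and an `R`-semilinear pairing is perfect if and only if the
corresponding `ι`-adjoint pairing is perfect. -/
theorem stmt_5
    (A : Type) [CommRing A]
    (R : Type) [CommRing R] [Algebra A R]
    [Module.Free A R] [Module.Finite A R]
    (τ : R →ₗ[A] A)
    (hτ : Function.Bijective fun r : R => τ ∘ₗ LinearMap.mul A R r)
    (ι : R ≃ₐ[A] R) (hι : ∀ r, ι (ι r) = r)
    (W : Type) [AddCommGroup W] [Module A W] [Module R W] [IsScalarTower A R W]
    (B : Type) [AddCommGroup B] [Module A B] :
    (Set.BijOn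
      (fun (e : W → W → R ⊗[A] B) (x y : W) =>
        (TensorProduct.lid A B) (LinearMap.rTensor B τ (e x y)))
      -- `R`-semilinear pairings
      {e | (∀ x x' y, e (x + x') y = e x y + e x' y) ∧
           (∀ x y y', e x (y + y') = e x y + e x y') ∧
           (∀ (r : R) (x y : W), e (r • x) y = r • e x y) ∧
           (∀ (r : R) (x y : W), e x (r • y) = ι r • e x y)}
      -- `ι`-adjoint pairings
      {b | (∀ x x' y, b (x + x') y = b x y + b x' y) ∧
           (∀ x y y', b x (y + y') = b x y + b x y') ∧
           (∀ (a : A) (x y : W), b (a • x) y = a • b x y) ∧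
           (∀ (a : A) (x y : W), b x (a • y) = a • b x y) ∧
           (∀ (r : R) (x y : W), b (r • x) y = b x (ι r • y))}) ∧
    (∀ e : W → W → R ⊗[A] B,
      ((∀ x x' y, e (x + x') y = e x y + e x' y) ∧
       (∀ x y y', e x (y + y') = e x y + e x y') ∧
       (∀ (r : R) (x y : W), e (r • x) y = r • e x y) ∧
       (∀ (r : R) (x y : W), e x (r • y) = ι r • e x y)) →
      -- `e` is perfect, i.e. `x ↦ e(x,·)` is a bijection of `W` onto
      -- `Hom_R(W^ι, R ⊗_A B)` ...
      ((∀ φ : W →ₗ[A] R ⊗[A] B,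
          (∀ (r : R) (y : W), φ (r • y) = ι r • φ y) →
          ∃! x : W, ∀ y, e x y = φ y)
        ↔
      -- ... iff the corresponding `ι`-adjoint pairing is perfect, i.e.
      -- `x ↦ b(x,·)` is a bijection of `W` onto `Hom_A(W, B)`
       (∀ ψ : W →ₗ[A] B, ∃! x : W, ∀ y,
          (TensorProduct.lid A B) (LinearMap.rTensor B τ (e x y)) = ψ y))) := by
  obtain ⟨T, hTdef⟩ : ∃ T : R ⊗[A] B →ₗ[A] B, ∀ z,
      (TensorProduct.lid A B) (LinearMap.rTensor B τ z) = T z :=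
    ⟨(TensorProduct.lid A B).toLinearMap ∘ₗ LinearMap.rTensor B τ, fun z => rfl⟩
  simp only [hTdef]
  obtain ⟨inj, surj⟩ := aux_key (B := B) τ hτ T (fun r b => by rw [← hTdef]; simp)
  choose G hG using surj
  have hTs : ∀ (s : R) (a : A) (z : R ⊗[A] B), T (s • a • z) = a • T (s • z) := by
    intro s a z
    rw [smul_comm, map_smul]
  have eA : ∀ (a : A) (z : R ⊗[A] B), algebraMap A R a • z = a • z :=
    fun a z => algebraMap_smul R a z
  have wA : ∀ (a : A) (z : W), algebraMap A R a • z = a • z :=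
    fun a z => algebraMap_smul R a z
  refine ⟨⟨?_, ?_, ?_⟩, ?_⟩
  · rintro e ⟨h1, h2, h3, h4⟩
    refine ⟨fun x x' y => ?_, fun x y y' => ?_, fun a x y => ?_, fun a x y => ?_,
      fun r x y => ?_⟩
    · simp only [h1, map_add]
    · simp only [h2, map_add]
    · simp only [← wA, h3]
      rw [eA, map_smul]
    · simp only [← wA, h4]
      rw [AlgEquiv.commutes, eA, map_smul]
    · simp only [h3, h4, hι]
  · rintro e ⟨-, -, h3, -⟩ e' ⟨-, -, h3', -⟩ h
    funext x y
    refine inj _ _ fun r => ?_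
    rw [← h3, ← h3']
    exact congr_fun (congr_fun h (r • x)) y
  · rintro b ⟨h1, h2, h3, h4, h5⟩
    let f : W → W → R →ₗ[A] B := fun x y =>
      { toFun := fun r => b (r • x) y
        map_add' := fun r s => by rw [add_smul, h1]
        map_smul' := fun a r => by rw [smul_assoc, h3]; rfl }
    have hf : ∀ x y r, T (r • G (f x y)) = b (r • x) y := fun x y r => hG (f x y) r
    refine ⟨fun x y => G (f x y), ⟨fun x x' y => ?_, fun x y y' => ?_, fun r x y => ?_,
      fun r x y => ?_⟩, ?_⟩
    · refine inj _ _ fun s => ?_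
      rw [smul_add, map_add]
      simp only [hf, smul_add, h1]
    · refine inj _ _ fun s => ?_
      rw [smul_add, map_add]
      simp only [hf, h2]
    · refine inj _ _ fun s => ?_
      rw [smul_smul, hf, hf, smul_smul]
    · refine inj _ _ fun s => ?_
      rw [smul_smul, hf, hf, mul_comm, mul_smul, h5 (ι r), hι]
    · funext x y
      have := hf x y 1
      simpa using this
  · rintro e ⟨h1, h2, h3, h4⟩
    have key : ∀ φ : W →ₗ[A] R ⊗[A] B, (∀ (r : R) (y : W), φ (r • y) = ι r • φ y) →
        ∀ x, (∀ y, e x y = φ y) ↔ (∀ y, T (e x y) = T (φ y)) := by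
      intro φ hφ x
      refine ⟨fun h y => by rw [h], fun h y => inj _ _ fun r => ?_⟩
      have := h (ι r • y)
      rwa [h4, hφ, hι] at this
    constructor
    · intro H ψ
      let f : W → R →ₗ[A] B := fun y =>
        { toFun := fun r => ψ (ι r • y)
          map_add' := fun r s => by rw [map_add, add_smul, map_add]
          map_smul' := fun a r => by
            rw [map_smul ι, smul_assoc, map_smul ψ]; rfl }
      have hf : ∀ y r, T (r • G (f y)) = ψ (ι r • y) := fun y r => hG (f y) r
      let φ : W →ₗ[A] R ⊗[A] B :=
        { toFun := fun y => G (f y)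
          map_add' := fun y y' => inj _ _ fun s => by
            rw [smul_add, map_add, hf, hf, hf, smul_add, map_add]
          map_smul' := fun a y => inj _ _ fun s => by
            rw [RingHom.id_apply, hTs, hf, hf, ← map_smul, ← wA, ← wA, smul_comm] }
      have hφ : ∀ (r : R) (y : W), φ (r • y) = ι r • φ y := fun r y => inj _ _ fun s => by
        change T (s • G (f (r • y))) = T (s • ι r • G (f y))
        rw [smul_smul, hf, hf, map_mul, hι, mul_smul]
      have hφψ : ∀ y, T (φ y) = ψ y := fun y => by
        have := hf y 1
        rw [one_smul, map_one, one_smul] at this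
        exact this
      have := H φ hφ
      simpa only [key φ hφ, hφψ] using this
    · intro H φ hφ
      have := H (T ∘ₗ φ)
      simpa only [key φ hφ, LinearMap.comp_apply] using this
end

section
/- Let p be an odd prime and let M be a 2×2 matrix over 𝔽_p with det M = −1. Then the 𝔽_p-dimension of the kernel of M² − I (the eigenspace of M² for the eigenvalue 1) is even; that is, it equals 0 or 2. -/
/-- If `p` is an odd prime and `M` is a `2×2` matrix over `𝔽_p`
with `det M = −1`, then the dimension of `ker (M² − I)` is even. -/
theorem stmt_8 (p : ℕ) [Fact p.Prime] (hodd : Odd p)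
    (M : Matrix (Fin 2) (Fin 2) (ZMod p)) (hdet : M.det = -1) :
    Even (Module.finrank (ZMod p) (LinearMap.ker (Matrix.toLin' (M ^ 2 - 1)))) := by
  have key : M ^ 2 - 1 = (M 0 0 + M 1 1) • M := by
    rw [Matrix.det_fin_two] at hdet
    ext i j
    fin_cases i <;> fin_cases j <;>
      simp [pow_two, Matrix.mul_apply, Fin.sum_univ_two] <;>
      first | (ring1) | linear_combination (-hdet)
  rw [key]
  by_cases ht : M 0 0 + M 1 1 = 0
  · rw [ht, zero_smul, map_zero, LinearMap.ker_zero, finrank_top]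
    simp
  · have hb : LinearMap.ker (Matrix.toLin' ((M 0 0 + M 1 1) • M)) = ⊥ := by
      rw [LinearMap.ker_eq_bot']
      intro v hv
      rw [Matrix.toLin'_apply] at hv
      refine Matrix.eq_zero_of_mulVec_eq_zero ?_ hv
      rw [Matrix.det_smul, hdet]
      simpa using ht
    rw [hb, finrank_bot]
    exact Even.zero
end

section
/- Let m be an odd positive integer, let k be a field of characteristic zero, let V be a finite-dimensional k-vector space, and let ρ be a k-linear representation of the dihedral group G of order 2m on V. If the subspace of vectors fixed by ρ(g) for every g in the rotation subgroup of G is zero, then dim_k V is even. -/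
/-- Let `m` be odd and positive, `k` a field of characteristic
zero, and `ρ` a representation of the dihedral group of order `2m` on a
finite-dimensional `k`-vector space `V`.  If the only vector fixed by all the
rotations is `0`, then `dim_k V` is even. -/
theorem stmt_12 (m : ℕ) (hm : 0 < m) (hodd : Odd m)
    (k : Type) [Field k] [CharZero k]
    (V : Type) [AddCommGroup V] [Module k V] [FiniteDimensional k V]
    (ρ : Representation k (DihedralGroup m) V)
    (hfix : ∀ v : V, (∀ i : ZMod m, ρ (DihedralGroup.r i) v = v) → v = 0) :
    Even (Module.finrank k V) := by
  -- `D = R - R⁻¹` is injective and anticommutes with a reflection `S`; compare determinants.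
  haveI : NeZero m := ⟨hm.ne'⟩
  set S : V →ₗ[k] V := ρ (DihedralGroup.sr 0) with hS
  set D : V →ₗ[k] V := ρ (DihedralGroup.r 1) - ρ (DihedralGroup.r (-1)) with hD
  have hanti : S * D = (-1 : k) • (D * S) := by
    rw [hS, hD, mul_sub, sub_mul, ← map_mul, ← map_mul, ← map_mul, ← map_mul]
    simp
  have hSdet : LinearMap.det S ≠ 0 := by
    have h : S * S = 1 := by rw [hS, ← map_mul]; simp
    have h2 : LinearMap.det S * LinearMap.det S = 1 := by rw [← map_mul, h, map_one]
    exact left_ne_zero_of_mul_eq_one h2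
  have hinj : LinearMap.ker D = ⊥ := by
    rw [LinearMap.ker_eq_bot']
    intro v hv
    apply hfix
    have h1 : ρ (DihedralGroup.r 1) v = ρ (DihedralGroup.r (-1)) v := by
      rw [← sub_eq_zero]; exact hv
    have h2 : ρ (DihedralGroup.r 2) v = v := by
      have := congrArg (ρ (DihedralGroup.r 1)) h1
      rw [← Module.End.mul_apply, ← Module.End.mul_apply, ← map_mul, ← map_mul] at this
      simpa [one_add_one_eq_two, ← DihedralGroup.one_def] using this
    have h3 : ∀ n : ℕ, ρ (DihedralGroup.r (2 * (n : ZMod m))) v = v := by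
      intro n
      induction n with
      | zero => simp [← DihedralGroup.one_def]
      | succ n ih =>
        have : (DihedralGroup.r (2 * ((n + 1 : ℕ) : ZMod m)) : DihedralGroup m)
            = DihedralGroup.r (2 * (n : ZMod m)) * DihedralGroup.r 2 := by
          rw [DihedralGroup.r_mul_r]; push_cast; ring_nf
        rw [this, map_mul, Module.End.mul_apply, h2, ih]
    intro i
    obtain ⟨c, hc⟩ := hodd
    have hc' : (2 * ((c + 1 : ℕ) : ZMod m)) = 1 := by
      have : ((2 * c + 1 : ℕ) : ZMod m) = 0 := by rw [← hc]; exact ZMod.natCast_self m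
      push_cast at this ⊢
      linear_combination this
    have h4 := h3 ((c + 1) * i.val)
    rwa [Nat.cast_mul, ← mul_assoc, hc', one_mul, ZMod.natCast_zmod_val] at h4
  have hDdet : LinearMap.det D ≠ 0 := by
    intro h
    exact (LinearMap.bot_lt_ker_of_det_eq_zero h).ne' hinj
  have hdet := congrArg LinearMap.det hanti
  rw [LinearMap.det_smul, map_mul, map_mul, mul_comm (LinearMap.det S)] at hdet
  by_contra hn
  rw [Nat.not_even_iff_odd] at hn
  rw [hn.neg_one_pow, neg_one_mul, self_eq_neg] at hdet
  exact mul_ne_zero hDdet hSdet hdet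
end
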